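/- For every integer k ≥ 2, the join of a single vertex with the complete bipartite graph K_{2,2k−3} satisfies φ(K1∇K_{2,2k−3}) = k−1; that is, K1∇K_{2,2k−3} contains k−1 pairwise edge-disjoint cycles but not k. -/

import Mathlib

open scoped Classical

namespace PaperEDC

/-- `G` contains `m` pairwise edge-disjoint cycles. -/
def HasEDC {V : Type*} (G : SimpleGraph V) (m : ℕ) : Prop :=
  ∃ c : Fin m → Σ v : V, G.Walk v v,
    (∀ i, (c i).2.IsCycle) ∧
    ∀ i j, i ≠ j → ∀ e ∈ (c i).2.edges, e ∉ (c j).2.edges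

/-- `φ(G)`: the maximum number of pairwise edge-disjoint cycles in `G`. -/
noncomputable def phi {V : Type*} (G : SimpleGraph V) : ℕ := sSup {m | HasEDC G m}

/-- `K₁ ∇ H`: the join of a single new vertex with `H`. -/
def joinK1 {V : Type*} (H : SimpleGraph V) : SimpleGraph (Option V) :=
  SimpleGraph.fromRel fun a b => a = none ∨ ∃ u v, a = some u ∧ b = some v ∧ H.Adj u v

/-- `t(G)`: the number of triangles of `G`. -/
noncomputable def triCount {V : Type*} (G : SimpleGraph V) : ℕ :=
  Nat.card {s : Finset V // G.IsNClique 3 s}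

/-- A triangle-cactus: a connected graph in which every edge lies on a cycle and every
cycle is a triangle. -/
def IsTriangleCactus {V : Type*} (G : SimpleGraph V) : Prop :=
  G.Connected ∧
  (∀ e ∈ G.edgeSet, ∃ (v : V) (w : G.Walk v v), w.IsCycle ∧ e ∈ w.edges) ∧
  ∀ (v : V) (w : G.Walk v v), w.IsCycle → w.length = 3

/-- `e(G)`: the number of edges of `G`. -/
noncomputable def ecard {V : Type*} (G : SimpleGraph V) : ℕ := Nat.card G.edgeSet

/-- `ρ(G)`: the spectral radius (largest adjacency eigenvalue) of `G`. -/
noncomputable def specRad {V : Type*} [Fintype V] (G : SimpleGraph V) : ℝ :=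
  sSup {x : ℝ | ∃ f : V → ℝ, f ≠ 0 ∧ ∀ v : V, ∑ u : V, (if G.Adj v u then f u else 0) = x * f v}

/-!
The upper bound charges every cycle of `K₁ ∇ K_{2,n}` two of `n + 2` tokens: the `n` vertices of the
large part and the two edges joining the apex to the small part. A vertex of the large part has
degree `3`, so no two edge-disjoint cycles share it. Every cycle passes through some vertex of the
small part, and the two edges it uses there each supply a token of their own.

For `n ≥ 2` the bound `⌊n / 2⌋ + 1` is attained by two triangles through the apex, one for each
vertex of the small part, together with 4-cycles on the small part and pairs of the remaining
vertices of the large part. For `n = 1` a single triangle suffices.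
-/

section EdgeDisjointCycles

variable {V : Type*} {G : SimpleGraph V}

theorem exists_two_neighbors_of_isCycle {u x : V} {p : G.Walk u u} (hp : p.IsCycle)
    (hx : x ∈ p.support) : ∃ N : Finset V, N.card = 2 ∧ ∀ y ∈ N, s(x, y) ∈ p.edges := by
  have hcard := hp.ncard_neighborSet_toSubgraph_eq_two hx
  obtain ⟨y, z, hyz, hN⟩ := Set.ncard_eq_two.mp hcard
  refine ⟨{y, z}, Finset.card_pair hyz, fun w hw => ?_⟩
  rw [← SimpleGraph.Walk.adj_toSubgraph_iff_mem_edges, ← SimpleGraph.Subgraph.mem_neighborSet, hN]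
  simpa using hw

theorem exists_ne_mem_edges_of_isCycle {u x : V} {p : G.Walk u u} (hp : p.IsCycle)
    (hx : x ∈ p.support) (w : V) : ∃ y, y ≠ w ∧ s(x, y) ∈ p.edges := by
  obtain ⟨N, hcard, hN⟩ := exists_two_neighbors_of_isCycle hp hx
  obtain ⟨y, hyN, hyw⟩ := Finset.exists_mem_ne (s := N) (by omega) w
  exact ⟨y, hyw, hN y hyN⟩

theorem exists_mem_edges_notMem_of_isCycle {u : V} {p : G.Walk u u} (hp : p.IsCycle) (w : V) :
    ∃ e ∈ p.edges, w ∉ e := by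
  obtain ⟨x, hx, hxw⟩ : ∃ x ∈ p.support, x ≠ w := by
    obtain ⟨y, hyw, hy⟩ := exists_ne_mem_edges_of_isCycle hp p.start_mem_support w
    exact ⟨y, p.snd_mem_support_of_mem_edges hy, hyw⟩
  obtain ⟨y, hyw, hy⟩ := exists_ne_mem_edges_of_isCycle hp hx w
  exact ⟨s(x, y), hy, by simp [hxw.symm, hyw.symm]⟩

theorem four_le_encard_neighborSet_of_edges_disjoint {u v x : V} {p : G.Walk u u} {q : G.Walk v v}
    (hp : p.IsCycle) (hq : q.IsCycle) (hpq : p.edges.Disjoint q.edges)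
    (hxp : x ∈ p.support) (hxq : x ∈ q.support) : 4 ≤ (G.neighborSet x).encard := by
  obtain ⟨M, hMcard, hM⟩ := exists_two_neighbors_of_isCycle hp hxp
  obtain ⟨N, hNcard, hN⟩ := exists_two_neighbors_of_isCycle hq hxq
  have hMN : Disjoint M N := Finset.disjoint_left.mpr fun y hyM hyN => hpq (hM y hyM) (hN y hyN)
  have hsub : (↑(M ∪ N) : Set V) ⊆ G.neighborSet x := fun y hy =>
    (Finset.mem_union.mp (Finset.mem_coe.mp hy)).elim
      (fun h => p.adj_of_mem_edges (hM y h)) (fun h => q.adj_of_mem_edges (hN y h))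
  calc (4 : ℕ∞) = (M ∪ N).card := by rw [Finset.card_union_of_disjoint hMN, hMcard, hNcard]; rfl
    _ = (↑(M ∪ N) : Set V).encard := (Set.encard_coe_eq_coe_finsetCard _).symm
    _ ≤ (G.neighborSet x).encard := Set.encard_le_encard hsub

theorem two_le_card_filter_support_add_card_filter_edges {u s : V} {p : G.Walk u u}
    (hp : p.IsCycle) (hs : s ∈ p.support) {I : Finset V} {F : Finset (Sym2 V)}
    (hadj : ∀ y, G.Adj s y → y ∈ I ∨ s(s, y) ∈ F) :
    2 ≤ (I.filter (· ∈ p.support)).card + (F.filter (· ∈ p.edges)).card := by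
  obtain ⟨N, hcard, hN⟩ := exists_two_neighbors_of_isCycle hp hs
  have hvertices : (N.filter (· ∈ I)).card ≤ (I.filter (· ∈ p.support)).card := by
    refine Finset.card_le_card fun y hy => ?_
    obtain ⟨hyN, hyI⟩ := Finset.mem_filter.mp hy
    exact Finset.mem_filter.mpr ⟨hyI, p.snd_mem_support_of_mem_edges (hN y hyN)⟩
  have hedges : (N.filter (· ∉ I)).card ≤ (F.filter (· ∈ p.edges)).card := by
    refine Finset.card_le_card_of_injOn (fun y => s(s, y)) (fun y hy => ?_)
      fun y _ z _ hyz => Sym2.congr_right.mp hyz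
    obtain ⟨hyN, hyI⟩ := Finset.mem_filter.mp hy
    exact Finset.mem_filter.mpr
      ⟨(hadj y (p.adj_of_mem_edges (hN y hyN))).resolve_left hyI, hN y hyN⟩
  have hsplit := N.card_filter_add_card_filter_not (· ∈ I)
  omega

theorem sum_card_filter_le_card {ι α : Type*} [Fintype ι] (A : Finset α) (P : ι → α → Prop)
    [∀ i, DecidablePred (P i)] (hP : ∀ a ∈ A, ∀ i j, P i a → P j a → i = j) :
    ∑ i, (A.filter (P i)).card ≤ A.card := by
  have hdisj : (↑(Finset.univ : Finset ι) : Set ι).PairwiseDisjoint fun i => A.filter (P i) :=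
    fun i _ j _ hij => Finset.disjoint_left.mpr fun a hi hj =>
      hij (hP a (Finset.mem_filter.mp hi).1 i j (Finset.mem_filter.mp hi).2
        (Finset.mem_filter.mp hj).2)
  rw [← Finset.card_biUnion hdisj]
  exact Finset.card_le_card (Finset.biUnion_subset.mpr fun i _ => Finset.filter_subset _ _)

theorem HasEDC.two_mul_le {m : ℕ} (h : HasEDC G m) {S : Set V} {I : Finset V}
    {F : Finset (Sym2 V)} (hS : ∀ u (p : G.Walk u u), p.IsCycle → ∃ s ∈ S, s ∈ p.support)
    (hI : ∀ v ∈ I, (G.neighborSet v).encard ≤ 3)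
    (hadj : ∀ s ∈ S, ∀ v, G.Adj s v → v ∈ I ∨ s(s, v) ∈ F) : 2 * m ≤ I.card + F.card := by
  obtain ⟨c, hc, hdisj⟩ := h
  have hvertices : ∑ i, (I.filter (· ∈ (c i).2.support)).card ≤ I.card := by
    refine sum_card_filter_le_card I _ fun v hv i j hi hj => by_contra fun hij => ?_
    have hfour := four_le_encard_neighborSet_of_edges_disjoint (hc i) (hc j)
      (fun {e} he he' => hdisj i j hij e he he') hi hj
    exact absurd (hfour.trans (hI v hv)) (by decide)
  have hedges : ∑ i, (F.filter (· ∈ (c i).2.edges)).card ≤ F.card :=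
    sum_card_filter_le_card F _ fun e _ i j hi hj => by_contra fun hij => hdisj i j hij e hi hj
  have hcycle (i : Fin m) :
      2 ≤ (I.filter (· ∈ (c i).2.support)).card + (F.filter (· ∈ (c i).2.edges)).card := by
    obtain ⟨s, hsS, hs⟩ := hS _ _ (hc i)
    exact two_le_card_filter_support_add_card_filter_edges (hc i) hs (hadj s hsS)
  calc 2 * m = ∑ _i : Fin m, 2 := by simp [mul_comm]
    _ ≤ ∑ i, ((I.filter (· ∈ (c i).2.support)).card + (F.filter (· ∈ (c i).2.edges)).card) :=
      Finset.sum_le_sum fun i _ => hcycle i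
    _ ≤ I.card + F.card := by rw [Finset.sum_add_distrib]; exact add_le_add hvertices hedges

theorem HasEDC.mono {m n : ℕ} (hmn : m ≤ n) (h : HasEDC G n) : HasEDC G m := by
  obtain ⟨c, hc, hdisj⟩ := h
  exact ⟨fun i => c (Fin.castLE hmn i), fun i => hc _,
    fun i j hij => hdisj _ _ ((Fin.castLE_injective hmn).ne hij)⟩

theorem hasEDC_of_edge_labelling {m : ℕ} (f : Sym2 V → ℕ)
    (h : ∀ i < m, ∃ u, ∃ p : G.Walk u u, p.IsCycle ∧ ∀ e ∈ p.edges, f e = i) : HasEDC G m := by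
  choose u p hp hf using fun i : Fin m => h i i.isLt
  exact ⟨fun i => ⟨u i, p i⟩, hp,
    fun i j hij e hi hj => hij (Fin.ext ((hf i e hi).symm.trans (hf j e hj)))⟩

theorem exists_isCycle_edges_eq_triangle {x y z : V} (hxy : G.Adj x y) (hyz : G.Adj y z)
    (hzx : G.Adj z x) :
    ∃ p : G.Walk x x, p.IsCycle ∧ p.edges = [s(x, y), s(y, z), s(z, x)] := by
  refine ⟨.cons hxy (.cons hyz (.cons hzx .nil)), ?_, rfl⟩
  simp [SimpleGraph.Walk.cons_isCycle_iff, hxy.ne, hxy.ne', hyz.ne, hzx.ne, hzx.ne']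

theorem exists_isCycle_edges_eq_square {w x y z : V} (hwx : G.Adj w x) (hxy : G.Adj x y)
    (hyz : G.Adj y z) (hzw : G.Adj z w) (hwy : w ≠ y) (hxz : x ≠ z) :
    ∃ p : G.Walk w w, p.IsCycle ∧ p.edges = [s(w, x), s(x, y), s(y, z), s(z, w)] := by
  refine ⟨.cons hwx (.cons hxy (.cons hyz (.cons hzw .nil))), ?_, rfl⟩
  simp [SimpleGraph.Walk.cons_isCycle_iff, hwx.ne, hwx.ne', hxy.ne, hyz.ne, hzw.ne, hzw.ne',
    hwy, hwy.symm, hxz]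

end EdgeDisjointCycles

section Join

variable {V : Type*} {H : SimpleGraph V}

theorem joinK1_adj_none_some (v : V) : (joinK1 H).Adj none (some v) := by
  simp [joinK1]

theorem joinK1_adj_some_some {u v : V} : (joinK1 H).Adj (some u) (some v) ↔ H.Adj u v := by
  simpa [joinK1, H.adj_comm v u] using SimpleGraph.Adj.ne

theorem encard_neighborSet_joinK1_some_le (v : V) :
    ((joinK1 H).neighborSet (some v)).encard ≤ (H.neighborSet v).encard + 1 := by
  have hsub : (joinK1 H).neighborSet (some v) ⊆ insert none (some '' H.neighborSet v) := by
    rintro (_ | u) hu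
    · exact Set.mem_insert _ _
    · exact Or.inr ⟨u, joinK1_adj_some_some.mp hu, rfl⟩
  calc ((joinK1 H).neighborSet (some v)).encard
      ≤ (insert none (some '' H.neighborSet v)).encard := Set.encard_le_encard hsub
    _ ≤ (some '' H.neighborSet v).encard + 1 := Set.encard_insert_le _ _
    _ = (H.neighborSet v).encard + 1 := by rw [(Option.some_injective V).encard_image]

theorem exists_mem_support_of_isCycle_joinK1 {S : Set V} (hS : H.IsVertexCover S)
    {u : Option V} {p : (joinK1 H).Walk u u} (hp : p.IsCycle) :
    ∃ s ∈ some '' S, s ∈ p.support := by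
  obtain ⟨e, he, hnone⟩ := exists_mem_edges_notMem_of_isCycle hp none
  induction e with | _ x y
  rcases x with _ | x
  · simp at hnone
  rcases y with _ | y
  · simp at hnone
  rcases hS (joinK1_adj_some_some.mp (p.adj_of_mem_edges he)) with hx | hy
  · exact ⟨_, ⟨x, hx, rfl⟩, p.fst_mem_support_of_mem_edges he⟩
  · exact ⟨_, ⟨y, hy, rfl⟩, p.snd_mem_support_of_mem_edges he⟩

theorem HasEDC.two_mul_le_of_isBipartiteWith {A B : Finset V} {m : ℕ}
    (h : HasEDC (joinK1 H) m) (hH : H.IsBipartiteWith A B)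
    (hB : ∀ b ∈ B, (H.neighborSet b).encard ≤ 2) : 2 * m ≤ A.card + B.card := by
  have hA : H.IsVertexCover A := fun _ _ huv => (hH.mem_of_adj huv).imp And.left And.right
  have hbound : 2 * m ≤ (B.image some).card + (A.image fun a => s(none, some a)).card := by
    refine h.two_mul_le (S := some '' A) (fun _ _ => exists_mem_support_of_isCycle_joinK1 hA) ?_ ?_
    · refine Finset.forall_mem_image.mpr fun b hb => ?_
      exact (encard_neighborSet_joinK1_some_le b).trans (add_le_add_left (hB b hb) 1)
    · rintro _ ⟨a, ha, rfl⟩ (_ | v) hadj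
      · exact Or.inr (Finset.mem_image.mpr ⟨a, ha, Sym2.eq_swap⟩)
      · have hvB := hH.mem_of_mem_adj ha (joinK1_adj_some_some.mp hadj)
        exact Or.inl (Finset.mem_image_of_mem _ hvB)
  have hvertices := B.card_image_le (f := some)
  have hedges := A.card_image_le (f := fun a => s(none, some a))
  omega

end Join

theorem isBipartiteWith_completeBipartiteGraph (V W : Type*) [Fintype V] [Fintype W] :
    (completeBipartiteGraph V W).IsBipartiteWith
      (Finset.univ.map .inl : Finset (V ⊕ W)) (Finset.univ.map .inr : Finset (V ⊕ W)) where
  disjoint := by simp [Set.disjoint_left]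
  mem_of_adj := by simp

theorem neighborSet_completeBipartiteGraph_inr {V W : Type*} (w : W) :
    (completeBipartiteGraph V W).neighborSet (Sum.inr w) = Set.range Sum.inl := by
  ext (v | v) <;> simp

theorem HasEDC.two_mul_le_of_completeBipartiteGraph {n m : ℕ}
    (h : HasEDC (joinK1 (completeBipartiteGraph (Fin 2) (Fin n))) m) : 2 * m ≤ n + 2 := by
  have hdeg (j : Fin n) :
      ((completeBipartiteGraph (Fin 2) (Fin n)).neighborSet (Sum.inr j)).encard ≤ 2 := by
    rw [neighborSet_completeBipartiteGraph_inr, ← Set.image_univ, Sum.inl_injective.encard_image]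
    simp
  have hbound := h.two_mul_le_of_isBipartiteWith (isBipartiteWith_completeBipartiteGraph _ _)
    (Finset.forall_mem_map.mpr fun j _ => hdeg j)
  simp only [Finset.card_map, Finset.card_fin] at hbound
  omega

/-- A vertex labelling of `K₁ ∇ K_{2,n}` encoding a packing of `⌊n / 2⌋ + 1` cycles: cycle `i` only
uses edges whose larger endpoint label is `i`. Cycles `0` and `1` are triangles through the apex,
and cycle `i ≥ 2` is the 4-cycle through the vertices `2 * i - 2` and `2 * i - 1` of the large
part. -/
def packingLabel {n : ℕ} : Option (Fin 2 ⊕ Fin n) → ℕ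
  | none => 0
  | some (.inl i) => i
  | some (.inr j) => if (j : ℕ) < 2 then j else j / 2 + 1

theorem exists_isCycle_packingLabel_eq {n i : ℕ} (hn : 1 ≤ n) (hi : i ≤ n / 2) :
    ∃ u, ∃ p : (joinK1 (completeBipartiteGraph (Fin 2) (Fin n))).Walk u u,
      p.IsCycle ∧ ∀ e ∈ p.edges, (e.map packingLabel).sup = i := by
  have hadj (a : Fin 2) (j : Fin n) : (joinK1 (completeBipartiteGraph (Fin 2) (Fin n))).Adj
      (some (.inl a)) (some (.inr j)) := joinK1_adj_some_some.mpr (by simp)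
  rcases lt_or_ge i 2 with hi2 | hi2
  · obtain ⟨p, hp, hedges⟩ := exists_isCycle_edges_eq_triangle
      (joinK1_adj_none_some _) (hadj ⟨i, hi2⟩ ⟨i, by omega⟩) (joinK1_adj_none_some _).symm
    refine ⟨_, p, hp, ?_⟩
    simp [hedges, packingLabel, hi2]
  · obtain ⟨p, hp, hedges⟩ := exists_isCycle_edges_eq_square
      (hadj 0 ⟨2 * i - 2, by omega⟩) (hadj 1 _).symm
      (hadj 1 ⟨2 * i - 1, by omega⟩) (hadj 0 _).symm (by simp)
      (by simp only [ne_eq, Option.some.injEq, Sum.inr.injEq, Fin.mk.injEq]; omega)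
    refine ⟨_, p, hp, ?_⟩
    have hfirst : ¬ 2 * i - 2 < 2 := by omega
    have hsecond : ¬ 2 * i - 1 < 2 := by omega
    simp only [hedges, packingLabel, hfirst, hsecond, if_false, List.forall_mem_cons,
      List.not_mem_nil, Sym2.map_mk, Sym2.sup_mk, Fin.val_zero, Fin.val_one,
      IsEmpty.forall_iff, implies_true, and_true]
    omega

theorem phi_joinK1_completeBipartite_general (n : ℕ) (hn : 1 ≤ n) :
    phi (joinK1 (completeBipartiteGraph (Fin 2) (Fin n))) = n / 2 + 1 ∧
    ∀ m, HasEDC (joinK1 (completeBipartiteGraph (Fin 2) (Fin n))) m ↔ m ≤ n / 2 + 1 := by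
  have hpacking : HasEDC (joinK1 (completeBipartiteGraph (Fin 2) (Fin n))) (n / 2 + 1) :=
    hasEDC_of_edge_labelling (fun e => (e.map packingLabel).sup) fun i hi =>
      exists_isCycle_packingLabel_eq hn (Nat.lt_succ_iff.mp hi)
  have hiff (m : ℕ) :
      HasEDC (joinK1 (completeBipartiteGraph (Fin 2) (Fin n))) m ↔ m ≤ n / 2 + 1 :=
    ⟨fun h => by have := h.two_mul_le_of_completeBipartiteGraph; omega, fun h => hpacking.mono h⟩
  exact ⟨by simp only [phi, hiff]; exact csSup_Iic, hiff⟩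

/-- For `k ≥ 2`, `φ(K₁ ∇ K_{2,2k-3}) = k - 1`: it contains `k-1` pairwise edge-disjoint
cycles but not `k`. -/
theorem phi_joinK1_completeBipartite (k : ℕ) (hk : 2 ≤ k) :
    phi (joinK1 (completeBipartiteGraph (Fin 2) (Fin (2 * k - 3)))) = k - 1 ∧
    HasEDC (joinK1 (completeBipartiteGraph (Fin 2) (Fin (2 * k - 3)))) (k - 1) ∧
    ¬ HasEDC (joinK1 (completeBipartiteGraph (Fin 2) (Fin (2 * k - 3)))) k := by
  obtain ⟨hphi, hEDC⟩ := phi_joinK1_completeBipartite_general (2 * k - 3) (by omega)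
  exact ⟨hphi.trans (by omega), (hEDC _).2 (by omega), fun h => by have := (hEDC k).1 h; omega⟩

end PaperEDC
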